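/- For every z ∈ ℂ such that z·id_K − 𝒯 is invertible in the bounded operators on K and z·id_H − T is invertible in the bounded operators on H, one has the resolvent identity (z − T)⁻¹ ∘ B = P ∘ (z − 𝒯)⁻¹ ∘ S ∘ Q as bounded operators from H to H. (This is the operator-algebraic content of the paper's Lemma 4.1, (z − T_R)⁻¹B = P(z − 𝒯_ℛ)⁻¹𝒮(P*P)⁻¹P*.) -/

import Mathlib

/-!
STATEMENT 4 (operator-algebraic content of Lemma 4.1 of the paper):
with `Q ∘ P = id`, `S² = S`, `𝒯 = S ∘ ℛ ∘ S`, `B = P ∘ S ∘ Q`, `T = P ∘ 𝒯 ∘ Q`,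
if `z - 𝒯` and `z - T` are invertible in the bounded operators, then
`(z - T)⁻¹ ∘ B = P ∘ (z - 𝒯)⁻¹ ∘ S ∘ Q`.
-/

open ContinuousLinearMap

section Intertwining

variable {R : Type*} [Semiring R] {E E' F F' : Type*}
  [TopologicalSpace E] [AddCommMonoid E] [Module R E]
  [TopologicalSpace E'] [AddCommMonoid E'] [Module R E']
  [TopologicalSpace F] [AddCommMonoid F] [Module R F]
  [TopologicalSpace F'] [AddCommMonoid F'] [Module R F']

theorem leftInverse_comp_eq_comp_rightInverse
    {A : E →L[R] E'} {A' : E' →L[R] E} {C : F →L[R] F'} {C' : F' →L[R] F}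
    {P : F →L[R] E} {P' : F' →L[R] E'}
    (hA : A' ∘L A = .id R E) (hC : C ∘L C' = .id R F') (hAC : A ∘L P = P' ∘L C) :
    A' ∘L P' = P ∘L C' :=
  calc
    A' ∘L P' = A' ∘L (P' ∘L (C ∘L C')) := by rw [hC, comp_id]
    _ = A' ∘L ((A ∘L P) ∘L C') := by rw [hAC, comp_assoc]
    _ = (A' ∘L A) ∘L (P ∘L C') := by simp only [comp_assoc]
    _ = P ∘L C' := by rw [hA, id_comp]

theorem conj_comp_eq_comp_of_leftInverse {P : F →L[R] E} {Q : E →L[R] F}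
    (hQP : Q ∘L P = .id R F) (A : F →L[R] F) :
    (P ∘L (A ∘L Q)) ∘L P = P ∘L A := by
  rw [comp_assoc, comp_assoc, hQP, comp_id]

end Intertwining

section Resolvent

variable {R : Type*} [CommRing R] {E F : Type*}
  [TopologicalSpace E] [AddCommGroup E] [Module R E]
  [IsTopologicalAddGroup E] [ContinuousConstSMul R E]
  [TopologicalSpace F] [AddCommGroup F] [Module R F]
  [IsTopologicalAddGroup F] [ContinuousConstSMul R F]

theorem smul_id_sub_comp_eq_comp_smul_id_sub {T : E →L[R] E} {A : F →L[R] F} {P : F →L[R] E}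
    (hTA : T ∘L P = P ∘L A) (z : R) :
    (z • .id R E - T) ∘L P = P ∘L (z • .id R F - A) := by
  rw [sub_comp, comp_sub, smul_comp, comp_smul, id_comp, comp_id, hTA]

theorem resolvent_identity_general
    (P : F →L[R] E) (Q : E →L[R] F) (hQP : Q ∘L P = .id R F)
    (S A : F →L[R] F)
    (B : E →L[R] E) (hB : B = P ∘L (S ∘L Q))
    (T : E →L[R] E) (hT : T = P ∘L (A ∘L Q))
    (z : R)
    (Tinv : E →L[R] E) (hTinv : Tinv ∘L (z • .id R E - T) = .id R E)
    (Ainv : F →L[R] F) (hAinv : (z • .id R F - A) ∘L Ainv = .id R F) :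
    Tinv ∘L B = P ∘L (Ainv ∘L (S ∘L Q)) := by
  have intertwines : T ∘L P = P ∘L A := hT ▸ conj_comp_eq_comp_of_leftInverse hQP A
  have resolvent_intertwines : Tinv ∘L P = P ∘L Ainv :=
    leftInverse_comp_eq_comp_rightInverse hTinv hAinv
      (smul_id_sub_comp_eq_comp_smul_id_sub intertwines z)
  rw [hB, ← comp_assoc, resolvent_intertwines, comp_assoc]

end Resolvent

theorem resolvent_identity
    {H K : Type*}
    [NormedAddCommGroup H] [InnerProductSpace ℂ H] [CompleteSpace H]
    [NormedAddCommGroup K] [InnerProductSpace ℂ K] [CompleteSpace K]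
    (P : K →L[ℂ] H) (Q : H →L[ℂ] K)
    (hQP : Q.comp P = ContinuousLinearMap.id ℂ K)
    (S : K →L[ℂ] K) (hS : S.comp S = S)
    (ℛ : K →L[ℂ] K)
    (𝒯 : K →L[ℂ] K) (h𝒯 : 𝒯 = S.comp (ℛ.comp S))
    (B : H →L[ℂ] H) (hB : B = P.comp (S.comp Q))
    (T : H →L[ℂ] H) (hT : T = P.comp (𝒯.comp Q))
    (z : ℂ)
    -- `z - T` is invertible in the bounded operators on `H`, with inverse `Tinv`
    (Tinv : H →L[ℂ] H)
    (hT1 : (z • ContinuousLinearMap.id ℂ H - T).comp Tinv = ContinuousLinearMap.id ℂ H)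
    (hT2 : Tinv.comp (z • ContinuousLinearMap.id ℂ H - T) = ContinuousLinearMap.id ℂ H)
    -- `z - 𝒯` is invertible in the bounded operators on `K`, with inverse `𝒯inv`
    (𝒯inv : K →L[ℂ] K)
    (h𝒯1 : (z • ContinuousLinearMap.id ℂ K - 𝒯).comp 𝒯inv = ContinuousLinearMap.id ℂ K)
    (h𝒯2 : 𝒯inv.comp (z • ContinuousLinearMap.id ℂ K - 𝒯) = ContinuousLinearMap.id ℂ K) :
    Tinv.comp B = P.comp (𝒯inv.comp (S.comp Q)) :=
  resolvent_identity_general P Q hQP S 𝒯 B hB T hT z Tinv hT2 𝒯inv h𝒯1
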